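/- arXiv:1103.1174 — 3 statements merged into one kernel-verified Lean document; each statement's English description precedes it below -/
import Mathlib

section
/- Let k be a field, A = k[X₀', X₁', X₀, …, Xₙ], let 𝔭 be an ideal of A, and let φ : A → A be any map. Assume that for every equidimensional ideal J of A all of whose associated primes are contained in 𝔭, at least one of the following two hypotheses holds: (1) for all x ∈ A and all a ∈ J, x·φ(a) lies in the ideal generated by the set φ(x·J) plus J; or (2) for all x ∈ A and all a ∈ J, φ(x)·φ(a) lies in the ideal generated by the set φ(x·J) plus J, and moreover for every associated prime 𝔮 of A/J the set-theoretic preimage φ⁻¹(𝔮) is a prime ideal of A with height φ⁻¹(𝔮) = height 𝔮. Then φ is correct with respect to 𝔭, i.e. for every ideal I of A all of whose associated primes are contained in 𝔭, the inclusion φ(I) ⊆ eq(I) implies φ(eq(I)) ⊆ eq(I). -/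
open scoped Classical

noncomputable section

/-- The height (rank) of an ideal: the minimum of the heights of the primes containing it. -/
noncomputable def idealHeight {R : Type*} [CommRing R] (I : Ideal R) : ℕ∞ :=
  ⨅ (p : PrimeSpectrum R) (_ : I ≤ p.asIdeal), Order.height p

/-- The contraction `I·A_𝔭 ∩ A` of an ideal `I` through the localization at a prime `𝔭`. -/
noncomputable def locContract {R : Type*} [CommRing R] (p : Ideal R) [p.IsPrime]
    (I : Ideal R) : Ideal R :=
  (I.map (algebraMap R (Localization.AtPrime p))).comap (algebraMap R (Localization.AtPrime p))

/-- `eq(I)`: the equidimensional part of minimal rank of `I`, i.e. the intersection of the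
contractions `I·A_𝔮 ∩ A` over the minimal primes `𝔮` of `I` of minimal height. -/
noncomputable def eqPart {R : Type*} [CommRing R] (I : Ideal R) : Ideal R :=
  ⨅ (p : PrimeSpectrum R) (_ : p.asIdeal ∈ I.minimalPrimes)
    (_ : idealHeight p.asIdeal = idealHeight I), locContract p.asIdeal I

/-- An ideal is equidimensional if all associated primes of `R ⧸ J` have height `height J`. -/
def IsEquidimensional {R : Type*} [CommRing R] (J : Ideal R) : Prop :=
  ∀ q ∈ associatedPrimes R (R ⧸ J), idealHeight q = idealHeight J

/-- The length of a module, as the longest chain of submodules. -/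
noncomputable def moduleLength (R M : Type*) [Ring R] [AddCommGroup M] [Module R M] : ℕ∞ :=
  Order.height (⊤ : Submodule R M)

/-- `m(I)`: the number of primary components of minimal height of `I`, counted with their
length as multiplicity: the sum over primes `𝔮` with `height 𝔮 = height I` of the length of
the `A_𝔮`-module `(A/I)_𝔮`. -/
noncomputable def mIdeal {R : Type*} [CommRing R] (I : Ideal R) : ℕ∞ :=
  ∑' p : PrimeSpectrum R,
    if idealHeight p.asIdeal = idealHeight I then
      moduleLength (Localization.AtPrime p.asIdeal)
        (LocalizedModule p.asIdeal.primeCompl (R ⧸ I))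
    else 0

/-!
Write `J = eq(I)`. In a Noetherian ring, the associated primes of `J` are the minimal primes of `I`
of minimal height, so `J` is equidimensional and the hypotheses on `φ` apply to it. The colon ideal
`(I : J)` becomes the unit ideal after localizing at any of these primes, hence it is contained in
no prime of height at most `height I`. For `s ∈ (I : J)` we have `s·J ⊆ I`, so the ideal generated
by `φ(s·J)` and `J` is just `J`: therefore `s·φ(a) ∈ J`, respectively `φ(s)·φ(a) ∈ J`, for `a ∈ J`.
Given an associated prime `𝔮` of `J`, choose `s ∉ 𝔮`, respectively `s ∉ φ⁻¹(𝔮)`, to cancel this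
factor in `A_𝔮`.
-/

section Height

variable {R : Type*} [CommRing R]

lemma idealHeight_eq_height (I : Ideal R) : idealHeight I = I.height := by
  refine le_antisymm ?_ (le_iInf₂ fun p hp => ?_)
  · rw [Ideal.height_eq_inf_minimalPrimes]
    refine le_iInf₂ fun p hp => ?_
    rw [PrimeSpectrum.height_eq_orderHeight ⟨p, hp.isPrime⟩]
    exact iInf₂_le (⟨p, hp.isPrime⟩ : PrimeSpectrum R) hp.le
  · rw [← PrimeSpectrum.height_eq_orderHeight]
    exact Ideal.height_mono hp

/-- The minimal primes of `I` whose height is the height of `I`: these are the primes over which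
the intersection `eqPart I` is taken. -/
def minimalHeightPrimes (I : Ideal R) : Set (Ideal R) :=
  {p ∈ I.minimalPrimes | p.height = I.height}

lemma mem_minimalHeightPrimes_of_height_le {I p : Ideal R} [p.IsPrime] [p.FiniteHeight]
    (hIp : I ≤ p) (h : p.height ≤ I.height) : p ∈ minimalHeightPrimes I :=
  ⟨Ideal.mem_minimalPrimes_of_height_le hIp h, h.antisymm (Ideal.height_mono hIp)⟩

end Height

section LocContract

variable {R : Type*} [CommRing R] {I J p : Ideal R} [p.IsPrime] {s a : R}

lemma le_locContract : I ≤ locContract p I :=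
  Ideal.le_comap_map

lemma mem_locContract_iff_not_colon_le : a ∈ locContract p I ↔ ¬ I.colon {a} ≤ p := by
  rw [locContract, Ideal.mem_comap,
    IsLocalization.algebraMap_mem_map_algebraMap_iff p.primeCompl, SetLike.not_le_iff_exists]
  simp only [Submodule.mem_colon_singleton, smul_eq_mul, Ideal.mem_primeCompl_iff, and_comm]

lemma le_locContract_iff_not_colon_le (hJ : J.FG) : J ≤ locContract p I ↔ ¬ I.colon J ≤ p := by
  obtain ⟨t, rfl⟩ := hJ
  have colon_eq : I.colon (Ideal.span (t : Set R)) = t.inf fun a => I.colon {a} := by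
    rw [Ideal.colon_span, ← Set.biUnion_of_singleton (t : Set R)]
    simp only [Submodule.colon_iUnion, Finset.inf_eq_iInf, Finset.mem_coe]
  rw [colon_eq, Ideal.IsPrime.inf_le' ‹_›, Ideal.span_le]
  simp only [Set.subset_def, SetLike.mem_coe, mem_locContract_iff_not_colon_le,
    not_exists, not_and]

lemma mul_mem_locContract_iff (hs : s ∉ p) : s * a ∈ locContract p I ↔ a ∈ locContract p I := by
  rw [locContract, Ideal.mem_comap, Ideal.mem_comap, map_mul]
  exact Ideal.unit_mul_mem_iff_mem _
    (IsLocalization.map_units (M := p.primeCompl) _ ⟨s, hs⟩)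

lemma locContract_le (hIp : I ≤ p) : locContract p I ≤ p :=
  (Ideal.comap_mono (Ideal.map_mono hIp)).trans
    (Ideal.under_map_of_isLocalizationAtPrime _ le_rfl).le

end LocContract

section EqPart

variable {R : Type*} [CommRing R] {I p : Ideal R} {a : R}

lemma mem_eqPart_iff :
    a ∈ eqPart I ↔
      ∀ (p : Ideal R) [p.IsPrime], p ∈ minimalHeightPrimes I → a ∈ locContract p I := by
  simp only [eqPart, Submodule.mem_iInf, idealHeight_eq_height]
  exact ⟨fun h p hp hpI => h ⟨p, hp⟩ hpI.1 hpI.2, fun h p h₁ h₂ => h p.asIdeal ⟨h₁, h₂⟩⟩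

lemma le_eqPart : I ≤ eqPart I := fun _ ha =>
  mem_eqPart_iff.2 fun _ _ _ => le_locContract ha

lemma eqPart_le_locContract [p.IsPrime] (hp : p ∈ minimalHeightPrimes I) :
    eqPart I ≤ locContract p I := fun _ ha =>
  mem_eqPart_iff.1 ha p hp

lemma minimalHeightPrimes_subset_minimalPrimes_eqPart :
    minimalHeightPrimes I ⊆ (eqPart I).minimalPrimes := fun p hp => by
  have : p.IsPrime := hp.1.isPrime
  exact ⟨⟨this, (eqPart_le_locContract hp).trans (locContract_le hp.1.le)⟩,
    fun q hq hqp => hp.1.2 ⟨hq.1, le_eqPart.trans hq.2⟩ hqp⟩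

lemma bot_colon_singleton_mk (J : Ideal R) (a : R) :
    (⊥ : Submodule R (R ⧸ J)).colon {Ideal.Quotient.mk J a} = J.colon {a} := by
  ext r
  rw [Submodule.mem_colon_singleton, Submodule.mem_colon_singleton, Submodule.mem_bot,
    Algebra.smul_def, Ideal.Quotient.algebraMap_eq, ← map_mul, Ideal.Quotient.eq_zero_iff_mem,
    smul_eq_mul]

lemma le_of_mem_associatedPrimes_quotient {J : Ideal R} (hp : p ∈ associatedPrimes R (R ⧸ J)) :
    J ≤ p := by
  simpa only [Submodule.annihilator_top, Ideal.annihilator_quotient] using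
    IsAssociatedPrime.annihilator_le hp

lemma associatedPrimes_quotient_eqPart_subset :
    associatedPrimes R (R ⧸ eqPart I) ⊆ minimalHeightPrimes I := fun p hp => by
  have hIp : I ≤ p := le_eqPart.trans (le_of_mem_associatedPrimes_quotient hp)
  obtain ⟨hp, x, hx⟩ := hp
  obtain ⟨y, rfl⟩ := Ideal.Quotient.mk_surjective x
  rw [bot_colon_singleton_mk] at hx
  have hy : y ∉ eqPart I := fun hy => hp.ne_top <| by
    rw [hx, (Submodule.colon_eq_top_iff_subset {y}).2 (Set.singleton_subset_iff.2 hy),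
      Ideal.radical_top]
  obtain ⟨q, hq, hqI, hyq⟩ : ∃ (q : Ideal R) (_ : q.IsPrime),
      q ∈ minimalHeightPrimes I ∧ y ∉ locContract q I := by
    simpa only [mem_eqPart_iff, not_forall, exists_prop] using hy
  have hpq : p ≤ q := fun r hr => by
    obtain ⟨m, hm⟩ : ∃ m, r ^ m ∈ (eqPart I).colon {y} := by rwa [hx] at hr
    by_contra hrq
    have hmq : r ^ m ∉ q := fun h => hrq (hq.mem_of_pow_mem m h)
    exact hyq ((mul_mem_locContract_iff hmq).1
      (eqPart_le_locContract hqI (Submodule.mem_colon_singleton.1 hm)))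
  rwa [hpq.antisymm (hqI.1.2 ⟨hp, hIp⟩ hpq)]

lemma isEquidimensional_eqPart (I : Ideal R) : IsEquidimensional (eqPart I) := fun q hq => by
  rw [idealHeight_eq_height, idealHeight_eq_height]
  have hqI : q.height = I.height := (associatedPrimes_quotient_eqPart_subset hq).2
  exact le_antisymm (hqI.trans_le (Ideal.height_mono le_eqPart))
    (Ideal.height_mono (le_of_mem_associatedPrimes_quotient hq))

end EqPart

section Noetherian

variable {R : Type*} [CommRing R] [IsNoetherianRing R] {I p : Ideal R}

lemma minimalPrimes_subset_associatedPrimes_quotient (I : Ideal R) :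
    I.minimalPrimes ⊆ associatedPrimes R (R ⧸ I) := by
  simpa only [Ideal.annihilator_quotient] using
    Module.associatedPrimes.minimalPrimes_annihilator_subset_associatedPrimes R (R ⧸ I)

lemma associatedPrimes_quotient_eqPart (I : Ideal R) :
    associatedPrimes R (R ⧸ eqPart I) = minimalHeightPrimes I :=
  associatedPrimes_quotient_eqPart_subset.antisymm <|
    minimalHeightPrimes_subset_minimalPrimes_eqPart.trans
      (minimalPrimes_subset_associatedPrimes_quotient _)

lemma not_colon_eqPart_le_of_height_le [p.IsPrime] (h : p.height ≤ I.height) :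
    ¬ I.colon (eqPart I) ≤ p := fun hp => by
  have hpI : p ∈ minimalHeightPrimes I :=
    mem_minimalHeightPrimes_of_height_le (Ideal.le_colon.trans hp) h
  exact (le_locContract_iff_not_colon_le (eqPart I).fg_of_isNoetherianRing).1
    (eqPart_le_locContract hpI) hp

end Noetherian

section Correctness

variable {R : Type*} [CommRing R]

/-- `φ` is correct with respect to `𝔭` if for every ideal `I` all of whose associated primes are
contained in `𝔭`, the inclusion `φ(I) ⊆ eq(I)` implies `φ(eq(I)) ⊆ eq(I)`. -/
def IsCorrectWithRespectTo (φ : R → R) (𝔭 : Ideal R) : Prop :=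
  ∀ I : Ideal R, (∀ q ∈ associatedPrimes R (R ⧸ I), q ≤ 𝔭) →
    (∀ a ∈ I, φ a ∈ eqPart I) → ∀ a ∈ eqPart I, φ a ∈ eqPart I

lemma span_image_mul_sup_le_of_mem_colon {I J : Ideal R} {φ : R → R} (hφ : ∀ a ∈ I, φ a ∈ J)
    {s : R} (hs : s ∈ I.colon J) :
    Ideal.span (φ '' ((fun b => s * b) '' (J : Set R))) ⊔ J ≤ J := by
  refine sup_le (Ideal.span_le.2 ?_) le_rfl
  rintro _ ⟨_, ⟨b, hb, rfl⟩, rfl⟩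
  exact hφ _ (Submodule.mem_colon.1 hs b hb)

/- The two alternatives of the criterion are the cases `ψ = id`, `Q = q` and `ψ = φ`,
`Q = φ⁻¹(q)`. -/
lemma map_mem_locContract_of_preimage_subset [IsNoetherianRing R] {I q Q : Ideal R} [q.IsPrime]
    [Q.IsPrime] {φ ψ : R → R} {a : R} (hφ : ∀ b ∈ I, φ b ∈ eqPart I)
    (hq : q ∈ minimalHeightPrimes I) (hψ : ψ ⁻¹' q ⊆ Q) (hQ : Q.height ≤ I.height)
    (h : ∀ x, ψ x * φ a ∈
      Ideal.span (φ '' ((fun b => x * b) '' (eqPart I : Set R))) ⊔ eqPart I) :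
    φ a ∈ locContract q I := by
  obtain ⟨s, hs, hsQ⟩ := SetLike.not_le_iff_exists.1 (not_colon_eqPart_le_of_height_le hQ)
  have hsa : ψ s * φ a ∈ eqPart I := span_image_mul_sup_le_of_mem_colon hφ hs (h s)
  have hsq : ψ s ∉ q := fun hsq => hsQ (hψ hsq)
  exact (mul_mem_locContract_iff hsq).1 (eqPart_le_locContract hq hsa)

theorem correctness_criterion_general [IsNoetherianRing R] (φ : R → R) (𝔭 : Ideal R)
    (hyp : ∀ J : Ideal R, IsEquidimensional J → (∀ q ∈ associatedPrimes R (R ⧸ J), q ≤ 𝔭) →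
      (∀ x, ∀ a ∈ J, x * φ a ∈ Ideal.span (φ '' ((fun b => x * b) '' (J : Set R))) ⊔ J) ∨
      ((∀ x, ∀ a ∈ J, φ x * φ a ∈ Ideal.span (φ '' ((fun b => x * b) '' (J : Set R))) ⊔ J) ∧
        ∀ q ∈ associatedPrimes R (R ⧸ J), ∃ Q : Ideal R,
          Q.IsPrime ∧ φ ⁻¹' (q : Set R) ⊆ Q ∧ idealHeight Q ≤ idealHeight q)) :
    IsCorrectWithRespectTo φ 𝔭 := by
  intro I hI hφ a ha
  have hass := associatedPrimes_quotient_eqPart I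
  have hJ𝔭 : ∀ q ∈ associatedPrimes R (R ⧸ eqPart I), q ≤ 𝔭 := fun q hq =>
    hI q (minimalPrimes_subset_associatedPrimes_quotient I (hass.le hq).1)
  refine mem_eqPart_iff.2 fun q _ hq => ?_
  rcases hyp (eqPart I) (isEquidimensional_eqPart I) hJ𝔭 with hmul | ⟨hmul, hpre⟩
  · exact map_mem_locContract_of_preimage_subset (ψ := id) hφ hq subset_rfl hq.2.le
      fun x => hmul x a ha
  · obtain ⟨Q, _, hQφ, hQq⟩ := hpre q (hass.ge hq)
    rw [idealHeight_eq_height, idealHeight_eq_height] at hQq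
    exact map_mem_locContract_of_preimage_subset hφ hq hQφ (hQq.trans hq.2.le)
      fun x => hmul x a ha

end Correctness

/-- Lemma `lem_phicorrecte` of the paper: a sufficient criterion for a transformation of the
polynomial ring to be correct with respect to an ideal `𝔭`. -/
theorem correctness_criterion
    {k : Type*} [Field k] (n : ℕ) (𝔭 : Ideal (MvPolynomial (Fin 2 ⊕ Fin (n + 1)) k))
    (φ : MvPolynomial (Fin 2 ⊕ Fin (n + 1)) k → MvPolynomial (Fin 2 ⊕ Fin (n + 1)) k)
    (hyp : ∀ J : Ideal (MvPolynomial (Fin 2 ⊕ Fin (n + 1)) k), IsEquidimensional J →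
      (∀ q ∈ associatedPrimes (MvPolynomial (Fin 2 ⊕ Fin (n + 1)) k)
        (MvPolynomial (Fin 2 ⊕ Fin (n + 1)) k ⧸ J), q ≤ 𝔭) →
      ((∀ x : MvPolynomial (Fin 2 ⊕ Fin (n + 1)) k, ∀ a ∈ J,
          x * φ a ∈ Ideal.span (φ '' ((fun b => x * b) '' (J : Set _))) ⊔ J)
        ∨ ((∀ x : MvPolynomial (Fin 2 ⊕ Fin (n + 1)) k, ∀ a ∈ J,
              φ x * φ a ∈ Ideal.span (φ '' ((fun b => x * b) '' (J : Set _))) ⊔ J)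
            ∧ ∀ q ∈ associatedPrimes (MvPolynomial (Fin 2 ⊕ Fin (n + 1)) k)
                (MvPolynomial (Fin 2 ⊕ Fin (n + 1)) k ⧸ J),
              ∃ Q : Ideal (MvPolynomial (Fin 2 ⊕ Fin (n + 1)) k), Q.IsPrime ∧
                (Q : Set _) = φ ⁻¹' (q : Set _) ∧ idealHeight Q = idealHeight q))) :
    ∀ I : Ideal (MvPolynomial (Fin 2 ⊕ Fin (n + 1)) k),
      (∀ q ∈ associatedPrimes (MvPolynomial (Fin 2 ⊕ Fin (n + 1)) k)
        (MvPolynomial (Fin 2 ⊕ Fin (n + 1)) k ⧸ I), q ≤ 𝔭) →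
      (∀ a ∈ I, φ a ∈ eqPart I) → ∀ a ∈ eqPart I, φ a ∈ eqPart I :=
  correctness_criterion_general φ 𝔭 fun J hJ hJ𝔭 => (hyp J hJ hJ𝔭).imp_right <| And.imp_right
    fun hpre q hq => (hpre q hq).imp fun _ => And.imp_right (And.imp Eq.ge Eq.le)
end
end

section
/- Let k be a field, A = k[X₀', X₁', X₀, …, Xₙ], and let D : A → A be a derivation (an additive map satisfying D(ab) = a·D(b) + D(a)·b). Let J be an ideal with D(J) ⊆ J, and suppose J = 𝔮 ∩ I, where 𝔮 is a primary ideal of A and I is an ideal of A not contained in the radical √𝔮 (this situation occurs for each primary component 𝔮 of an equidimensional D-stable ideal J). Then D(𝔮) ⊆ 𝔮, i.e. the primary component 𝔮 is itself D-stable. -/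
open scoped Classical

theorem primary_component_of_derivation_stable_ideal_is_stable_general
    {A : Type*} [CommRing A] {D : A → A} (hleib : ∀ a b, D (a * b) = a * D b + D a * b)
    {q I : Ideal A} (hq : q.IsPrimary) (hI : ¬ I ≤ q.radical)
    (hstable : ∀ a ∈ q ⊓ I, D a ∈ q) :
    ∀ a ∈ q, D a ∈ q := by
  intro a ha
  obtain ⟨b, hbI, hb⟩ := SetLike.not_le_iff_exists.mp hI
  have hDab : a * D b + D a * b ∈ q :=
    hleib a b ▸ hstable (a * b) ⟨q.mul_mem_right b ha, I.mul_mem_left a hbI⟩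
  have hDa_mul : D a * b ∈ q := (q.add_mem_iff_right (q.mul_mem_right (D b) ha)).mp hDab
  exact ((Ideal.isPrimary_iff.mp hq).2 hDa_mul).resolve_right hb

/-- Primary components of an equidimensional `D`-stable ideal are `D`-stable, for a
derivation `D` of the polynomial ring (from the proof of Theorem `LMGPD` of the paper):
if `J = 𝔮 ⊓ I` is `D`-stable, `𝔮` is primary and `I ⊄ √𝔮`, then `𝔮` is `D`-stable. -/
theorem primary_component_of_derivation_stable_ideal_is_stable
    {k : Type*} [Field k] (n : ℕ)
    (D : MvPolynomial (Fin 2 ⊕ Fin (n + 1)) k → MvPolynomial (Fin 2 ⊕ Fin (n + 1)) k)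
    (hadd : ∀ a b, D (a + b) = D a + D b)
    (hleib : ∀ a b, D (a * b) = a * D b + D a * b)
    (J q I : Ideal (MvPolynomial (Fin 2 ⊕ Fin (n + 1)) k))
    (hq : q.IsPrimary) (hI : ¬ I ≤ q.radical) (hJ : J = q ⊓ I)
    (hJstable : ∀ a ∈ J, D a ∈ J) :
    ∀ a ∈ q, D a ∈ q := by
  subst hJ
  exact primary_component_of_derivation_stable_ideal_is_stable_general hleib hq hI
    fun a ha => (hJstable a ha).1
end

section
/- Let k be a field, n ≥ 2, let f₁, …, fₙ ∈ k[[z]] be formal power series, and let a, b be nonnegative integers. Then there exists a nonzero polynomial Q ∈ k[z][X₁, …, Xₙ] with deg_z Q ≤ a and total degree at most b in the variables X₁, …, Xₙ, such that ord_{z=0} Q(z, f₁(z), …, fₙ(z)) ≥ ⌊(a+1)(b+1)ⁿ / n!⌋ (where the order is infinite if the evaluation is the zero power series). -/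
open scoped Classical

/-!
Polynomials of degree at most `a` in `z` and at most `b` in `X₁, …, Xₙ` form a free module of rank
`(a + 1) * (b + n).choose n`, and vanishing to order `m` imposes `m` linear conditions. So every
`m` below the rank can be reached, and for `2 ≤ n` this includes `(a + 1) * (b + 1) ^ n / n !`,
because `(b + 1) ^ n < (b + 1) * (b + 2) * ⋯ * (b + n) = n ! * (b + n).choose n`.
-/

open Module MvPolynomial PowerSeries

theorem exists_ne_zero_le_order_of_lt_finrank {R M : Type*} [Ring R] [StrongRankCondition R]
    [AddCommGroup M] [Module R M] (φ : M →ₗ[R] R⟦X⟧) {m : ℕ} (hm : m < finrank R M) :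
    ∃ v, v ≠ 0 ∧ (m : ℕ∞) ≤ (φ v).order := by
  let firstCoeffs : M →ₗ[R] (Fin m → R) := LinearMap.pi fun i ↦ PowerSeries.coeff (i : ℕ) ∘ₗ φ
  have not_injective : ¬ Function.Injective firstCoeffs := fun h ↦
    hm.not_ge <| by simpa using LinearMap.finrank_le_finrank_of_injective h
  obtain ⟨v, hv, hv0⟩ : ∃ v, firstCoeffs v = 0 ∧ v ≠ 0 := by
    simpa [injective_iff_map_eq_zero] using not_injective
  exact ⟨v, hv0, PowerSeries.nat_le_order _ _ fun i hi ↦ congrFun hv ⟨i, hi⟩⟩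

theorem ncard_setOf_degree_le (σ : Type*) [Fintype σ] (b : ℕ) :
    {d : σ →₀ ℕ | d.degree ≤ b}.ncard = (b + Fintype.card σ).choose (Fintype.card σ) := by
  have eq_biUnion : {d : σ →₀ ℕ | d.degree ≤ b} =
      ((Finset.range (b + 1)).biUnion (Finset.univ : Finset σ).finsuppAntidiag :
        Finset (σ →₀ ℕ)) := by
    ext d
    simp [Finsupp.degree_eq_sum]
  have disjoint_antidiag {i j : ℕ} (hij : i ≠ j) :
      Disjoint ((Finset.univ : Finset σ).finsuppAntidiag i) (Finset.univ.finsuppAntidiag j) := by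
    refine Finset.disjoint_left.mpr fun d hi hj ↦ hij ?_
    rw [← (Finset.mem_finsuppAntidiag.mp hi).1, (Finset.mem_finsuppAntidiag.mp hj).1]
  rw [eq_biUnion, Set.ncard_coe_finset, Finset.card_biUnion fun i _ j _ ↦ disjoint_antidiag]
  simp only [Finset.card_finsuppAntidiag_nat_eq_multichoose, Finset.card_univ,
    Nat.sum_range_multichoose]

theorem ncard_setOf_zero_le_and_degree_tail_le (n a b : ℕ) :
    {d : Fin (n + 1) →₀ ℕ | d 0 ≤ a ∧ d.tail.degree ≤ b}.ncard = (a + 1) * (b + n).choose n := by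
  have eq_image : {d : Fin (n + 1) →₀ ℕ | d 0 ≤ a ∧ d.tail.degree ≤ b} =
      Function.uncurry Finsupp.cons '' (Set.Iic a ×ˢ {d | d.degree ≤ b}) := by
    ext d
    refine ⟨fun hd ↦ ⟨(d 0, d.tail), hd, d.cons_tail⟩, ?_⟩
    rintro ⟨⟨i, d⟩, hd, rfl⟩
    simpa using hd
  rw [eq_image, Set.ncard_image_of_injective _ Finsupp.cons_injective2.uncurry, Set.ncard_prod,
    Set.ncard_Iic_nat, ncard_setOf_degree_le, Fintype.card_fin]

section Bidegree

variable (R : Type*) [CommSemiring R] (n a b : ℕ)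

/-- The polynomials in `z = X 0` and `X 1, …, X n` of degree at most `a` in `z` and of total degree
at most `b` in the other variables: the space in which the auxiliary polynomial is sought. -/
noncomputable def bidegreeLE : Submodule R (MvPolynomial (Fin (n + 1)) R) :=
  restrictSupport R {d | d 0 ≤ a ∧ d.tail.degree ≤ b}

variable {R n a b} in
theorem mem_bidegreeLE {Q : MvPolynomial (Fin (n + 1)) R} :
    Q ∈ bidegreeLE R n a b ↔
      Q.degreeOf 0 ≤ a ∧ (Q.support.sup fun d ↦ ∑ j : Fin n, d j.succ) ≤ b := by
  simp [bidegreeLE, mem_restrictSupport_iff, Set.subset_def, degreeOf_le_iff, Finset.sup_le_iff,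
    Finsupp.degree_eq_sum, Finsupp.tail_apply, forall_and]

theorem finrank_bidegreeLE [StrongRankCondition R] :
    finrank R (bidegreeLE R n a b) = (a + 1) * (b + n).choose n :=
  (finrank_eq_nat_card_basis (basisRestrictSupport R _)).trans
    (ncard_setOf_zero_le_and_degree_tail_le n a b)

end Bidegree

theorem mul_pow_div_factorial_lt_mul_choose {n c : ℕ} (hn : 2 ≤ n) (hc : 0 < c) (b : ℕ) :
    c * (b + 1) ^ n / n.factorial < c * (b + n).choose n := by
  rw [Nat.div_lt_iff_lt_mul n.factorial_pos]
  calc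
    c * (b + 1) ^ n < c * (b + 1).ascFactorial n := by
      gcongr
      exact Nat.pow_lt_ascFactorial b hn
    _ = c * (b + n).choose n * n.factorial := by
      rw [Nat.ascFactorial_eq_factorial_mul_choose]
      ring

theorem auxiliary_polynomial_exists_general {R : Type*} [CommRing R] [Nontrivial R] {n : ℕ}
    (x : Fin (n + 1) → R⟦X⟧) {a b m : ℕ} (hm : m < (a + 1) * (b + n).choose n) :
    ∃ Q : MvPolynomial (Fin (n + 1)) R, Q ≠ 0 ∧
      Q.degreeOf 0 ≤ a ∧
      (Q.support.sup fun d ↦ ∑ j : Fin n, d j.succ) ≤ b ∧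
      (m : ℕ∞) ≤ (aeval x Q).order := by
  rw [← finrank_bidegreeLE R] at hm
  obtain ⟨⟨Q, hQ⟩, hQ0, hord⟩ := exists_ne_zero_le_order_of_lt_finrank
    ((aeval x).toLinearMap ∘ₗ (bidegreeLE R n a b).subtype) hm
  obtain ⟨hz, hX⟩ := mem_bidegreeLE.mp hQ
  exact ⟨Q, fun h ↦ hQ0 (Subtype.ext h), hz, hX, hord⟩

/-- Construction of an auxiliary polynomial with large order of vanishing along
`(z, f₁(z), …, fₙ(z))` by linear algebra (inequality `ie_Qab` of the paper).  Variable `0`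
of the polynomial ring plays the role of `z`. -/
theorem auxiliary_polynomial_exists
    {k : Type*} [Field k] (n : ℕ) (hn : 2 ≤ n)
    (f : Fin n → PowerSeries k) (a b : ℕ) :
    ∃ Q : MvPolynomial (Fin (n + 1)) k, Q ≠ 0 ∧
      Q.degreeOf 0 ≤ a ∧
      (Q.support.sup fun d => ∑ j : Fin n, d j.succ) ≤ b ∧
      (((a + 1) * (b + 1) ^ n / n.factorial : ℕ) : ℕ∞) ≤
        (MvPolynomial.aeval (Fin.cons PowerSeries.X f) Q).order :=
  auxiliary_polynomial_exists_general _ (mul_pow_div_factorial_lt_mul_choose hn a.succ_pos b)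
end
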